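/- Let T > 0 and let f : ℝ² → ℂ be smooth and 2π-periodic in its second variable, with ∂̄f := ½(∂₁f + i·∂₂f) satisfying the pointwise bound |∂̄f(t,θ)| ≤ (1/10)·(|∂₁f(t,θ)|² + |∂₂f(t,θ)|²)^{1/2} for all (t,θ) with |t| ≤ T. Define the energy E(t) := ½·∫_{−t}^{t} ∫_0^{2π} (|∂₁f|² + |∂₂f|²) dθ dτ for t ∈ [0,T]. Then E is differentiable on (0,T) with (2/3)·E(t) ≤ E′(t) for every t ∈ (0,T), and consequently E(t) ≤ e^{−(2/3)(T−t)}·E(T) for every t ∈ [0,T]. (This is the analytic core of the paper's Lemma 5.2 on exponential decay of the energy of almost-holomorphic maps along the neck of the degenerating cylinder.) -/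

import Mathlib

open Real intervalIntegral

/-- Poincare inequality with vanishing ends (non-sharp constant `(4/9)^2 < 1/4`). -/
lemma poincare_aux (w w' : ℝ → ℝ) (hw : ∀ x, HasDerivAt w (w' x) x) (hc : Continuous w')
    (h0 : w 0 = 0) (h1 : w (2 * π) = 0) :
    (16 / 81) * ∫ x in (0:ℝ)..(2 * π), w x ^ 2 ≤ ∫ x in (0:ℝ)..(2 * π), w' x ^ 2 := by
  have hpi := Real.pi_pos
  have hwc : Continuous w := continuous_iff_continuousAt.2 fun x => (hw x).continuousAt
  set φ : ℝ → ℝ := fun x => -(4 / 9) * Real.tan ((4 / 9) * (x - π)) with hφ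
  have hcos : ∀ x ∈ Set.uIcc (0:ℝ) (2 * π), Real.cos ((4 / 9) * (x - π)) ≠ 0 := by
    intro x hx
    rw [Set.uIcc_of_le (by positivity)] at hx
    obtain ⟨hx1, hx2⟩ := hx
    exact (Real.cos_pos_of_mem_Ioo ⟨by linarith, by linarith⟩).ne'
  have hφd : ∀ x ∈ Set.uIcc (0:ℝ) (2 * π), HasDerivAt φ (-(16 / 81) - φ x ^ 2) x := by
    intro x hx
    have hc := hcos x hx
    have h1 : HasDerivAt (fun x : ℝ => (4 / 9) * (x - π)) ((4 / 9) * 1) x :=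
      ((hasDerivAt_id x).sub_const π).const_mul (4 / 9)
    have h2 := ((Real.hasDerivAt_tan hc).comp x h1).const_mul (-(4 / 9) : ℝ)
    refine h2.congr_deriv ?_
    simp only [hφ]
    have h3 := Real.sin_sq_add_cos_sq ((4 / 9) * (x - π))
    rw [Real.tan_eq_sin_div_cos]
    generalize Real.cos ((4 / 9) * (x - π)) = c at *
    generalize Real.sin ((4 / 9) * (x - π)) = d at *
    field_simp
    nlinarith
  have hφc : ContinuousOn φ (Set.uIcc (0:ℝ) (2 * π)) := fun x hx =>
    (hφd x hx).continuousAt.continuousWithinAt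
  have hgd : ∀ x ∈ Set.uIcc (0:ℝ) (2 * π), HasDerivAt (fun x => φ x * w x ^ 2)
      (w' x ^ 2 - (16 / 81) * w x ^ 2 - (w' x - φ x * w x) ^ 2) x := by
    intro x hx
    refine ((hφd x hx).mul ((hw x).pow 2)).congr_deriv ?_
    simp
    ring
  have i1 : IntervalIntegrable (fun x => w' x ^ 2) MeasureTheory.volume 0 (2 * π) :=
    (hc.pow 2).intervalIntegrable _ _
  have i2 : IntervalIntegrable (fun x => (16 / 81) * w x ^ 2) MeasureTheory.volume 0 (2 * π) :=
    ((hwc.pow 2).const_mul _).intervalIntegrable _ _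
  have i3 : IntervalIntegrable (fun x => (w' x - φ x * w x) ^ 2) MeasureTheory.volume 0 (2 * π) :=
    ((hc.continuousOn.sub (hφc.mul hwc.continuousOn)).pow 2).intervalIntegrable
  have hI := integral_eq_sub_of_hasDerivAt hgd ((i1.sub i2).sub i3)
  rw [integral_sub (i1.sub i2) i3, integral_sub i1 i2, integral_const_mul] at hI
  have hn : 0 ≤ ∫ x in (0:ℝ)..(2 * π), (w' x - φ x * w x) ^ 2 :=
    integral_nonneg (by positivity) fun x _ => sq_nonneg _
  simp only [h0, h1] at hI
  linarith

/-- Isoperimetric-type inequality. -/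
lemma isoper_aux (u u' v v' : ℝ → ℝ) (hu : ∀ x, HasDerivAt u (u' x) x) (hcu : Continuous u')
    (hv : ∀ x, HasDerivAt v (v' x) x) (hcv : Continuous v')
    (pu : u (2 * π) = u 0) (pv : v (2 * π) = v 0) :
    |∫ x in (0:ℝ)..(2 * π), (u x * v' x - v x * u' x)|
      ≤ (9 / 4) * ∫ x in (0:ℝ)..(2 * π), (u' x ^ 2 + v' x ^ 2) := by
  have hpi := Real.pi_pos
  have huc : Continuous u := continuous_iff_continuousAt.2 fun x => (hu x).continuousAt
  have hvc : Continuous v := continuous_iff_continuousAt.2 fun x => (hv x).continuousAt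
  have Pu := poincare_aux (fun x => u x - u 0) u' (fun x => (hu x).sub_const _) hcu
    (by simp) (by simp [pu])
  have Pv := poincare_aux (fun x => v x - v 0) v' (fun x => (hv x).sub_const _) hcv
    (by simp) (by simp [pv])
  have ii : ∀ {g : ℝ → ℝ}, Continuous g →
      IntervalIntegrable g MeasureTheory.volume 0 (2 * π) := fun h => h.intervalIntegrable _ _
  have Iu : ∫ x in (0:ℝ)..(2 * π), u' x = 0 := by
    rw [integral_eq_sub_of_hasDerivAt (fun x _ => hu x) (ii hcu), pu, sub_self]
  have Iv : ∫ x in (0:ℝ)..(2 * π), v' x = 0 := by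
    rw [integral_eq_sub_of_hasDerivAt (fun x _ => hv x) (ii hcv), pv, sub_self]
  have key : ∫ x in (0:ℝ)..(2 * π), (u x * v' x - v x * u' x)
      = ∫ x in (0:ℝ)..(2 * π), ((u x - u 0) * v' x - (v x - v 0) * u' x) := by
    have : ∀ x, (u x - u 0) * v' x - (v x - v 0) * u' x
      = (u x * v' x - v x * u' x) - (u 0 * v' x - v 0 * u' x) := fun x => by ring
    simp_rw [this]
    have h2 : ∫ x in (0:ℝ)..(2 * π), (u 0 * v' x - v 0 * u' x) = 0 := by
      rw [integral_sub (ii (by fun_prop)) (ii (by fun_prop)),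
        integral_const_mul, integral_const_mul, Iu, Iv]
      simp
    rw [integral_sub (f := fun x => u x * v' x - v x * u' x) (ii (by fun_prop))
      (ii (by fun_prop)), h2, sub_zero]
  rw [key]
  have hb : |∫ x in (0:ℝ)..(2 * π), ((u x - u 0) * v' x - (v x - v 0) * u' x)| ≤
      ∫ x in (0:ℝ)..(2 * π), ((2 / 9) * (u x - u 0) ^ 2 + (2 / 9) * (v x - v 0) ^ 2
        + (9 / 8) * (u' x ^ 2 + v' x ^ 2)) := by
    refine (abs_integral_le_integral_abs (by positivity)).trans ?_
    refine integral_mono_on (by positivity) (ii (by fun_prop)) (ii (by fun_prop)) fun x _ => ?_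
    rw [abs_le]
    constructor
    · nlinarith [sq_nonneg ((2 / 3) * (u x - u 0) + (3 / 2) * v' x),
        sq_nonneg ((2 / 3) * (v x - v 0) - (3 / 2) * u' x)]
    · nlinarith [sq_nonneg ((2 / 3) * (u x - u 0) - (3 / 2) * v' x),
        sq_nonneg ((2 / 3) * (v x - v 0) + (3 / 2) * u' x)]
  refine hb.trans ?_
  rw [integral_add (ii (by fun_prop)) (ii (by fun_prop)),
    integral_add (ii (by fun_prop)) (ii (by fun_prop)), integral_const_mul, integral_const_mul,
    integral_const_mul]
  rw [integral_add (f := fun x => u' x ^ 2) (ii (by fun_prop)) (ii (by fun_prop))]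
  linarith

/-- Pointwise consequences of the bound on the antiholomorphic derivative. -/
lemma pointwise_aux (a b : ℂ)
    (h : ‖(1 / 2 : ℂ) * (a + Complex.I * b)‖ ≤ (1 / 10) * Real.sqrt (‖a‖ ^ 2 + ‖b‖ ^ 2)) :
    (12 / 25) * (‖a‖ ^ 2 + ‖b‖ ^ 2) ≤ a.re * b.im - a.im * b.re ∧
      b.re ^ 2 + b.im ^ 2 ≤ (16 / 25) * (‖a‖ ^ 2 + ‖b‖ ^ 2) := by
  set s := Real.sqrt (‖a‖ ^ 2 + ‖b‖ ^ 2) with hs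
  have hs0 : 0 ≤ s := Real.sqrt_nonneg _
  have hs2 : s ^ 2 = ‖a‖ ^ 2 + ‖b‖ ^ 2 := Real.sq_sqrt (by positivity)
  have h' : ‖a + Complex.I * b‖ ≤ (1 / 5) * s := by
    rw [norm_mul] at h
    norm_num at h
    linarith
  have na : ‖a‖ ^ 2 = a.re ^ 2 + a.im ^ 2 := by
    rw [Complex.sq_norm, Complex.normSq_apply]; ring
  have nb : ‖b‖ ^ 2 = b.re ^ 2 + b.im ^ 2 := by
    rw [Complex.sq_norm, Complex.normSq_apply]; ring
  have nab : ‖a + Complex.I * b‖ ^ 2 = (a.re - b.im) ^ 2 + (a.im + b.re) ^ 2 := by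
    rw [Complex.sq_norm, Complex.normSq_apply]; simp; ring
  constructor
  · have : ‖a + Complex.I * b‖ ^ 2 ≤ ((1 / 5) * s) ^ 2 := by gcongr
    nlinarith
  · rw [← nb, ← hs2]
    have h3 : ‖b‖ ≤ ‖a‖ + (1 / 5) * s := by
      have : ‖Complex.I * b‖ ≤ ‖a + Complex.I * b‖ + ‖a‖ := by
        have := norm_sub_le (a + Complex.I * b) a
        simpa using this
      rw [norm_mul, Complex.norm_I, one_mul] at this
      linarith
    have : ‖b‖ ≤ (4 / 5) * s := by
      by_contra! hlt
      have ha : (3 / 5) * s < ‖a‖ := by linarith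
      nlinarith [norm_nonneg a, norm_nonneg b]
    calc ‖b‖ ^ 2 ≤ ((4 / 5) * s) ^ 2 := by gcongr
      _ = _ := by ring

/-- Stokes on the cylinder. -/
lemma stokes_aux (f : ℝ × ℝ → ℂ) (hf : ContDiff ℝ (⊤ : ℕ∞) f)
    (hper : ∀ t θ : ℝ, f (t, θ + 2 * π) = f (t, θ)) (t : ℝ) :
    ∫ τ in (-t)..t, ∫ θ in (0:ℝ)..(2 * π),
      ((fderiv ℝ f (τ, θ) (1, 0)).re * (fderiv ℝ f (τ, θ) (0, 1)).im
        - (fderiv ℝ f (τ, θ) (1, 0)).im * (fderiv ℝ f (τ, θ) (0, 1)).re)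
    = (1 / 2) * (∫ θ in (0:ℝ)..(2 * π), ((f (t, θ)).re * (fderiv ℝ f (t, θ) (0, 1)).im
        - (f (t, θ)).im * (fderiv ℝ f (t, θ) (0, 1)).re))
      - (1 / 2) * (∫ θ in (0:ℝ)..(2 * π), ((f (-t, θ)).re * (fderiv ℝ f (-t, θ) (0, 1)).im
        - (f (-t, θ)).im * (fderiv ℝ f (-t, θ) (0, 1)).re)) := by
  have hfd : Differentiable ℝ f := hf.differentiable (by simp)
  have hd1 : ContDiff ℝ (⊤ : ℕ∞) (fderiv ℝ f) := hf.fderiv_right (by simp)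
  have hdd : Differentiable ℝ (fderiv ℝ f) := hd1.differentiable (by simp)
  have hsym : ∀ p v w, fderiv ℝ (fderiv ℝ f) p v w = fderiv ℝ (fderiv ℝ f) p w v := fun p v w =>
    ((contDiff_infty.1 hf 2).contDiffAt.isSymmSndFDerivAt (by simp)) v w
  have hc0 : Continuous f := hf.continuous
  have hc1 : Continuous (fderiv ℝ f) := hd1.continuous
  have hev : ∀ v : ℝ × ℝ, Continuous fun p => fderiv ℝ f p v := fun v => hc1.clm_apply continuous_const
  have hre : ∀ {g : ℝ × ℝ → ℂ} {g' : ℝ × ℝ →L[ℝ] ℂ} {p}, HasFDerivAt g g' p →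
      HasFDerivAt (fun q => (g q).re) (Complex.reCLM.comp g') p := fun h =>
    Complex.reCLM.hasFDerivAt.comp _ h
  have him : ∀ {g : ℝ × ℝ → ℂ} {g' : ℝ × ℝ →L[ℝ] ℂ} {p}, HasFDerivAt g g' p →
      HasFDerivAt (fun q => (g q).im) (Complex.imCLM.comp g') p := fun h =>
    Complex.imCLM.hasFDerivAt.comp _ h
  have hev' : ∀ (v p : ℝ × ℝ), HasFDerivAt (fun q => fderiv ℝ f q v)
      ((fderiv ℝ (fderiv ℝ f) p).flip v) p := fun v p => by
    have := (hdd p).hasFDerivAt.clm_apply (hasFDerivAt_const v p)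
    simpa using this
  have hP : ∀ v p, ∃ L : ℝ × ℝ →L[ℝ] ℝ,
      HasFDerivAt (fun q => (f q).re * (fderiv ℝ f q v).im - (f q).im * (fderiv ℝ f q v).re) L p ∧
      ∀ w, L w = (fderiv ℝ f p w).re * (fderiv ℝ f p v).im
        - (fderiv ℝ f p w).im * (fderiv ℝ f p v).re
        + ((f p).re * (fderiv ℝ (fderiv ℝ f) p w v).im
          - (f p).im * (fderiv ℝ (fderiv ℝ f) p w v).re) := by
    intro v p
    refine ⟨_, ((hre (hfd p).hasFDerivAt).mul (him (hev' v p))).sub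
      ((him (hfd p).hasFDerivAt).mul (hre (hev' v p))), fun w => ?_⟩
    simp
    ring
  choose L hL hLw using hP
  have hPc : ∀ v : ℝ × ℝ, Continuous
      (fun q => (f q).re * (fderiv ℝ f q v).im - (f q).im * (fderiv ℝ f q v).re) := fun v =>
    continuous_iff_continuousAt.2 fun p => (hL v p).continuousAt
  have hdiv : ∀ q, ((1 / 2 : ℝ) • L (0, 1) q) (1, 0) + ((-1 / 2 : ℝ) • L (1, 0) q) (0, 1)
      = (fderiv ℝ f q (1, 0)).re * (fderiv ℝ f q (0, 1)).im
        - (fderiv ℝ f q (1, 0)).im * (fderiv ℝ f q (0, 1)).re := by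
    intro q
    simp only [smul_apply, hLw, smul_eq_mul]
    rw [hsym q (1, 0) (0, 1)]
    ring
  have hperd : ∀ τ, fderiv ℝ f (τ, 2 * π) = fderiv ℝ f (τ, 0) := by
    intro τ
    have h1 : (fun q : ℝ × ℝ => f (q + (0, 2 * π))) = f := by
      funext q
      have := hper q.1 q.2
      simpa [Prod.add_def] using this
    have h2 := fderiv_comp_add_right (𝕜 := ℝ) (f := f) (x := (τ, (0:ℝ))) ((0, 2 * π) : ℝ × ℝ)
    rw [h1] at h2
    rw [h2]
    simp
  have hper0 : ∀ τ, f (τ, 2 * π) = f (τ, 0) := fun τ => by simpa using hper τ 0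
  have key := MeasureTheory.integral2_divergence_prod_of_hasFDerivAt
    (fun q => (1 / 2 : ℝ) • ((f q).re * (fderiv ℝ f q (0, 1)).im
      - (f q).im * (fderiv ℝ f q (0, 1)).re))
    (fun q => (-1 / 2 : ℝ) • ((f q).re * (fderiv ℝ f q (1, 0)).im
      - (f q).im * (fderiv ℝ f q (1, 0)).re))
    (fun q => (1 / 2 : ℝ) • L (0, 1) q) (fun q => (-1 / 2 : ℝ) • L (1, 0) q)
    (-t) 0 t (2 * π)
    ((hPc (0, 1)).const_smul (1 / 2 : ℝ)).continuousOn
    ((hPc (1, 0)).const_smul (-1 / 2 : ℝ)).continuousOn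
    (fun x _ => (hL (0, 1) x).const_smul (1 / 2 : ℝ))
    (fun x _ => (hL (1, 0) x).const_smul (-1 / 2 : ℝ))
    (by
      simp only [hdiv]
      refine ContinuousOn.integrableOn_compact (isCompact_uIcc.prod isCompact_uIcc) ?_
      have := hev (1, 0)
      have := hev (0, 1)
      exact Continuous.continuousOn (by fun_prop))
  simp only [hdiv] at key
  rw [key]
  simp only [hperd, hper0, smul_eq_mul, integral_const_mul]
  ring

/-- The analytic core of Lemma 5.2: if `f : ℝ² → ℂ` is smooth, `2π`-periodic in `θ`, and
satisfies `|∂̄f| ≤ (1/10)·|df|` pointwise for `|t| ≤ T`, then the energy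
`E(t) = ½ ∫_{−t}^{t} ∫_0^{2π} |df|² dθ dτ` satisfies the differential inequality
`(2/3)·E(t) ≤ E′(t)` on `(0,T)`, and consequently decays exponentially:
`E(t) ≤ e^{−(2/3)(T−t)}·E(T)` on `[0,T]`. -/
theorem energy_exponential_decay (T : ℝ) (hT : 0 < T) (f : ℝ × ℝ → ℂ)
    (hf : ContDiff ℝ (⊤ : ℕ∞) f)
    (hper : ∀ t θ : ℝ, f (t, θ + 2 * π) = f (t, θ))
    (hdbar : ∀ t θ : ℝ, |t| ≤ T →
      ‖(1 / 2 : ℂ) * (fderiv ℝ f (t, θ) (1, 0) + Complex.I * fderiv ℝ f (t, θ) (0, 1))‖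
        ≤ (1 / 10) * Real.sqrt (‖fderiv ℝ f (t, θ) (1, 0)‖ ^ 2
            + ‖fderiv ℝ f (t, θ) (0, 1)‖ ^ 2))
    (E : ℝ → ℝ)
    (hE : ∀ t : ℝ, E t = (1 / 2) * ∫ τ in (-t)..t, ∫ θ in (0:ℝ)..(2 * π),
      (‖fderiv ℝ f (τ, θ) (1, 0)‖ ^ 2 + ‖fderiv ℝ f (τ, θ) (0, 1)‖ ^ 2)) :
    (∀ t ∈ Set.Ioo 0 T, DifferentiableAt ℝ E t ∧ (2 / 3) * E t ≤ deriv E t) ∧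
      (∀ t ∈ Set.Icc 0 T, E t ≤ Real.exp (-(2 / 3) * (T - t)) * E T) := by
  have hpi := Real.pi_pos
  have hd1 : ContDiff ℝ (⊤ : ℕ∞) (fderiv ℝ f) := hf.fderiv_right (by simp)
  have hfd : Differentiable ℝ f := hf.differentiable (by simp)
  have hc1 : Continuous (fderiv ℝ f) := hd1.continuous
  have hc0 : Continuous f := hf.continuous
  have ca : Continuous fun p => fderiv ℝ f p (1, 0) := hc1.clm_apply continuous_const
  have cb : Continuous fun p => fderiv ℝ f p (0, 1) := hc1.clm_apply continuous_const
  set e : ℝ → ℝ := fun τ => ∫ θ in (0:ℝ)..(2 * π),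
      (‖fderiv ℝ f (τ, θ) (1, 0)‖ ^ 2 + ‖fderiv ℝ f (τ, θ) (0, 1)‖ ^ 2) with he
  have hec : Continuous e :=
    continuous_parametric_intervalIntegral_of_continuous'
      (f := fun τ θ : ℝ => ‖fderiv ℝ f (τ, θ) (1, 0)‖ ^ 2 + ‖fderiv ℝ f (τ, θ) (0, 1)‖ ^ 2)
      (by
        have : Continuous fun p => ‖fderiv ℝ f p (1, 0)‖ ^ 2 + ‖fderiv ℝ f p (0, 1)‖ ^ 2 := by
          fun_prop
        exact this) 0 (2 * π)
  have hED : ∀ t, HasDerivAt E ((1 / 2) * (e t + e (-t))) t := by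
    intro t
    have hE' : E = fun t => (1 / 2) * ((∫ τ in (0:ℝ)..t, e τ) - ∫ τ in (0:ℝ)..(-t), e τ) := by
      funext t
      rw [hE t, integral_interval_sub_left (hec.intervalIntegrable _ _)
        (hec.intervalIntegrable _ _)]
    have d : ∀ s, HasDerivAt (fun s => ∫ τ in (0:ℝ)..s, e τ) (e s) s := fun s =>
      integral_hasDerivAt_right (hec.intervalIntegrable _ _)
        hec.aestronglyMeasurable.stronglyMeasurableAtFilter hec.continuousAt
    rw [hE']
    refine (((d t).sub ((d (-t)).comp t (hasDerivAt_neg t))).const_mul (1 / 2)).congr_deriv ?_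
    ring
  -- boundary estimate
  have hbd : ∀ τ, |τ| ≤ T → |∫ θ in (0:ℝ)..(2 * π), ((f (τ, θ)).re * (fderiv ℝ f (τ, θ) (0, 1)).im
        - (f (τ, θ)).im * (fderiv ℝ f (τ, θ) (0, 1)).re)| ≤ (36 / 25) * e τ := by
    intro τ hτ
    have hline : ∀ θ, HasDerivAt (fun θ : ℝ => f (τ, θ)) (fderiv ℝ f (τ, θ) (0, 1)) θ := fun θ =>
      (hfd (τ, θ)).hasFDerivAt.comp_hasDerivAt θ
        ((hasDerivAt_const θ τ).prodMk (hasDerivAt_id θ))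
    have cb' : Continuous fun θ : ℝ => fderiv ℝ f (τ, θ) (0, 1) :=
      cb.comp (by fun_prop : Continuous fun θ : ℝ => (τ, θ))
    have ca' : Continuous fun θ : ℝ => fderiv ℝ f (τ, θ) (1, 0) :=
      ca.comp (by fun_prop : Continuous fun θ : ℝ => (τ, θ))
    have hp0 : f (τ, 2 * π) = f (τ, 0) := by simpa using hper τ 0
    have h1 := isoper_aux (fun θ => (f (τ, θ)).re) (fun θ => (fderiv ℝ f (τ, θ) (0, 1)).re)
      (fun θ => (f (τ, θ)).im) (fun θ => (fderiv ℝ f (τ, θ) (0, 1)).im)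
      (fun θ => Complex.reCLM.hasFDerivAt.comp_hasDerivAt θ (hline θ)) (by fun_prop)
      (fun θ => Complex.imCLM.hasFDerivAt.comp_hasDerivAt θ (hline θ)) (by fun_prop)
      (by simp [hp0]) (by simp [hp0])
    refine h1.trans ?_
    have h2 : ∫ θ in (0:ℝ)..(2 * π), ((fderiv ℝ f (τ, θ) (0, 1)).re ^ 2
        + (fderiv ℝ f (τ, θ) (0, 1)).im ^ 2) ≤ (16 / 25) * e τ := by
      rw [he, ← integral_const_mul]
      refine integral_mono_on (by positivity)
        (Continuous.intervalIntegrable (by fun_prop) _ _)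
        (Continuous.intervalIntegrable (by fun_prop) _ _) fun θ _ => ?_
      exact (pointwise_aux _ _ (hdbar τ θ hτ)).2
    linarith
  have hmain : ∀ t ∈ Set.Ioo 0 T, (2 / 3) * E t ≤ (1 / 2) * (e t + e (-t)) := by
    rintro t ⟨ht0, htT⟩
    have hst := stokes_aux f hf hper t
    have b1 := (abs_le.1 (hbd t (by rw [abs_of_pos ht0]; exact htT.le))).2
    have b2 := (abs_le.1 (hbd (-t) (by rw [abs_neg, abs_of_pos ht0]; exact htT.le))).1
    have h3 : (12 / 25) * ∫ τ in (-t)..t, e τ ≤ ∫ τ in (-t)..t, ∫ θ in (0:ℝ)..(2 * π),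
      ((fderiv ℝ f (τ, θ) (1, 0)).re * (fderiv ℝ f (τ, θ) (0, 1)).im
        - (fderiv ℝ f (τ, θ) (1, 0)).im * (fderiv ℝ f (τ, θ) (0, 1)).re) := by
      have hgc : Continuous fun τ : ℝ => ∫ θ in (0:ℝ)..(2 * π),
        ((fderiv ℝ f (τ, θ) (1, 0)).re * (fderiv ℝ f (τ, θ) (0, 1)).im
          - (fderiv ℝ f (τ, θ) (1, 0)).im * (fderiv ℝ f (τ, θ) (0, 1)).re) :=
        continuous_parametric_intervalIntegral_of_continuous'
          (f := fun τ θ : ℝ => (fderiv ℝ f (τ, θ) (1, 0)).re * (fderiv ℝ f (τ, θ) (0, 1)).im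
            - (fderiv ℝ f (τ, θ) (1, 0)).im * (fderiv ℝ f (τ, θ) (0, 1)).re)
          (by
            have : Continuous fun p => (fderiv ℝ f p (1, 0)).re * (fderiv ℝ f p (0, 1)).im
              - (fderiv ℝ f p (1, 0)).im * (fderiv ℝ f p (0, 1)).re := by fun_prop
            exact this) 0 (2 * π)
      rw [← integral_const_mul]
      refine integral_mono_on (by linarith) ((hec.const_mul _).intervalIntegrable _ _)
        (hgc.intervalIntegrable _ _) fun τ hτ => ?_
      have cb' : Continuous fun θ : ℝ => fderiv ℝ f (τ, θ) (0, 1) :=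
        cb.comp (by fun_prop : Continuous fun θ : ℝ => (τ, θ))
      have ca' : Continuous fun θ : ℝ => fderiv ℝ f (τ, θ) (1, 0) :=
        ca.comp (by fun_prop : Continuous fun θ : ℝ => (τ, θ))
      simp only [he]
      rw [← integral_const_mul]
      refine integral_mono_on (by positivity)
        (Continuous.intervalIntegrable (by fun_prop) _ _)
        (Continuous.intervalIntegrable (by fun_prop) _ _) fun θ _ => ?_
      exact (pointwise_aux _ _ (hdbar τ θ (abs_le.2 ⟨by linarith [hτ.1], by linarith [hτ.2]⟩))).1
    rw [hst] at h3
    have hEt : E t = (1 / 2) * ∫ τ in (-t)..t, e τ := hE t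
    rw [hEt]
    linarith
  refine ⟨fun t ht => ⟨(hED t).differentiableAt, ?_⟩, ?_⟩
  · rw [(hED t).deriv]
    exact hmain t ht
  · intro t ht
    have hG : ∀ s, HasDerivAt (fun s => Real.exp (-(2 / 3) * s) * E s)
        (Real.exp (-(2 / 3) * s) * ((1 / 2) * (e s + e (-s)) - (2 / 3) * E s)) s := by
      intro s
      have h1 : HasDerivAt (fun s : ℝ => Real.exp (-(2 / 3) * s))
          (Real.exp (-(2 / 3) * s) * (-(2 / 3) * 1)) s :=
        ((hasDerivAt_id s).const_mul (-(2 / 3))).exp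
      refine (h1.mul (hED s)).congr_deriv ?_
      ring
    have hmono : MonotoneOn (fun s => Real.exp (-(2 / 3) * s) * E s) (Set.Icc 0 T) := by
      refine monotoneOn_of_deriv_nonneg (convex_Icc 0 T)
        (fun s _ => (hG s).continuousAt.continuousWithinAt)
        (fun s _ => (hG s).differentiableAt.differentiableWithinAt) fun s hs => ?_
      rw [interior_Icc] at hs
      rw [(hG s).deriv]
      exact mul_nonneg (Real.exp_pos _).le (by linarith [hmain s hs])
    have h := hmono ht ⟨hT.le, le_rfl⟩ ht.2
    simp only at h
    calc E t = Real.exp ((2 / 3) * t) * (Real.exp (-(2 / 3) * t) * E t) := by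
          rw [← mul_assoc, ← Real.exp_add]; ring_nf; simp
      _ ≤ Real.exp ((2 / 3) * t) * (Real.exp (-(2 / 3) * T) * E T) := by gcongr
      _ = _ := by rw [← mul_assoc, ← Real.exp_add]; ring_nf
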